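/- arXiv:1807.00481 — 2 statements merged into one kernel-verified Lean document; each statement's English description precedes it below -/
import Mathlib

section
/- Let n ≥ 1. The family of matrices (N_{2μ}), indexed by the partitions μ of n, is linearly independent over ℂ, and its span is exactly the set of all M_{2n} × M_{2n} complex matrices T satisfying T(π·A, π·B) = T(A,B) for all permutations π of Fin (2n) and all A, B ∈ M_{2n} (equivalently, all matrices commuting with every permutation matrix of the conjugation action of S_{2n} on M_{2n}). -/
/-- The multiset of cardinalities of the orbits of a subgroup of permutations
acting on a finite type. -/
noncomputable def orbitSizes {α : Type*} [Fintype α] (G : Subgroup (Equiv.Perm α)) :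
    Multiset ℕ :=
  letI : Fintype (Quotient (MulAction.orbitRel G α)) := Fintype.ofFinite _
  (Finset.univ : Finset (Quotient (MulAction.orbitRel G α))).val.map
    fun q => Nat.card (MulAction.orbit G q.out)

/-- `d(A,B)`. -/
noncomputable def dMatch {N : ℕ} (A B : Equiv.Perm (Fin N)) : Multiset ℕ :=
  orbitSizes (Subgroup.closure {A, B})

/-- Doubling every part of a partition (as a multiset). -/
def twice (m : Multiset ℕ) : Multiset ℕ := m.map (fun i => 2 * i)

/-- Perfect matchings of the complete graph on `Fin N`, identified with
fixed-point-free involutions of `Fin N`. -/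
abbrev PerfMatching (N : ℕ) := {A : Equiv.Perm (Fin N) // A * A = 1 ∧ ∀ x, A x ≠ x}

/-- The orbital basis element `N_{2μ}`: the perfect-matching by perfect-matching
matrix with `(A,B)` entry `1` if `d(A,B) = 2μ` and `0` otherwise. -/
noncomputable def Nmat (n : ℕ) (μ : Nat.Partition n) :
    Matrix (PerfMatching (2 * n)) (PerfMatching (2 * n)) ℂ :=
  Matrix.of fun A B => if dMatch A.1 B.1 = twice μ.parts then 1 else 0

/-- The first reference matching on a disjoint union of even cycles. -/
def cycleSwap {ι : Type*} (k : ι → ℕ) :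
    (Σ i, ZMod (k i) × Bool) → (Σ i, ZMod (k i) × Bool)
  | ⟨i, z, b⟩ => ⟨i, z, !b⟩

/-- The second reference matching on a disjoint union of even cycles. -/
def cycleShift {ι : Type*} (k : ι → ℕ) :
    (Σ i, ZMod (k i) × Bool) → (Σ i, ZMod (k i) × Bool)
  | ⟨i, z, true⟩ => ⟨i, z + 1, false⟩
  | ⟨i, z, false⟩ => ⟨i, z - 1, true⟩

theorem cycleSwap_involutive {ι : Type*} (k : ι → ℕ) :
    Function.Involutive (cycleSwap k) := by
  rintro ⟨i, z, b⟩
  simp [cycleSwap]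

theorem cycleShift_involutive {ι : Type*} (k : ι → ℕ) :
    Function.Involutive (cycleShift k) := by
  rintro ⟨i, z, _ | _⟩ <;> simp [cycleShift]

theorem cycleSwap_ne {ι : Type*} (k : ι → ℕ) (x) : cycleSwap k x ≠ x := by
  obtain ⟨i, z, _ | _⟩ := x <;> simp [cycleSwap]

theorem cycleShift_ne {ι : Type*} (k : ι → ℕ) (x) : cycleShift k x ≠ x := by
  obtain ⟨i, z, _ | _⟩ := x <;> simp [cycleShift]

/-- `e` identifies the pair `(A, B)` with the reference pair of matchings on the disjoint union
of cycles of lengths `2 * k i`. -/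
structure IsCycleModel {α ι : Type*} (A B : Equiv.Perm α) (k : ι → ℕ)
    (e : (Σ i, ZMod (k i) × Bool) ≃ α) : Prop where
  pos : ∀ i, 0 < k i
  swap : ∀ x, A (e x) = e (cycleSwap k x)
  shift : ∀ x, B (e x) = e (cycleShift k x)

theorem exists_equiv_of_map_univ_eq {ι ι' β : Type*} [Fintype ι] [Fintype ι'] {f : ι → β}
    {g : ι' → β}
    (h : (Finset.univ : Finset ι).val.map f = (Finset.univ : Finset ι').val.map g) :
    ∃ σ : ι ≃ ι', f = g ∘ σ := by
  classical
  have hc : ∀ c, Fintype.card {a // f a = c} = Fintype.card {b // g b = c} := by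
    intro c
    have := congrArg (Multiset.count c) h
    rw [Multiset.count_map, Multiset.count_map] at this
    rw [Fintype.card_subtype, Fintype.card_subtype]
    simpa [Finset.card_def, eq_comm] using this
  refine ⟨Equiv.ofFiberEquiv fun c => Fintype.equivOfCardEq (hc c), ?_⟩
  ext a
  exact (Equiv.ofFiberEquiv_map _ a).symm

theorem orbitSizes_eq_map_card_fiber {α ι : Type*} [Fintype α] [Fintype ι]
    (G : Subgroup (Equiv.Perm α)) (p : α → ι) (hp : Function.Surjective p)
    (h : ∀ x y, p x = p y ↔ x ∈ MulAction.orbit G y) :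
    orbitSizes G = (Finset.univ : Finset ι).val.map fun i => Nat.card {x // p x = i} := by
  let _ : Fintype (Quotient (MulAction.orbitRel G α)) := Fintype.ofFinite _
  let f : Quotient (MulAction.orbitRel G α) → ι := Quotient.lift p fun x y hxy => (h x y).2 hxy
  have hf : Function.Bijective f := by
    constructor
    · intro x y
      induction x using Quotient.inductionOn
      induction y using Quotient.inductionOn
      intro hxy
      exact Quotient.sound ((h _ _).1 hxy)
    · intro i
      obtain ⟨x, rfl⟩ := hp i
      exact ⟨⟦x⟧, rfl⟩
  have hu : (Finset.univ : Finset ι) = Finset.univ.map (Equiv.ofBijective f hf).toEmbedding := by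
    simp
  rw [hu, Finset.map_val, Multiset.map_map]
  refine Multiset.map_congr rfl fun q _ => ?_
  have hq : f q = p q.out := by
    conv_lhs => rw [← q.out_eq]
    rfl
  refine Nat.card_congr (Equiv.subtypeEquivRight fun x => ?_)
  change _ ↔ p x = f q
  rw [hq, h]

namespace IsCycleModel

variable {α ι : Type*} {A B : Equiv.Perm α} {k : ι → ℕ} {e : (Σ i, ZMod (k i) × Bool) ≃ α}

theorem mem_orbit_base (h : IsCycleModel A B k e) (i : ι) (z : ZMod (k i)) (b : Bool) :
    e ⟨i, z, b⟩ ∈ MulAction.orbit (Subgroup.closure {A, B}) (e ⟨i, 0, false⟩) := by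
  have hA : A ∈ Subgroup.closure {A, B} := Subgroup.subset_closure (by simp)
  have hB : B ∈ Subgroup.closure {A, B} := Subgroup.subset_closure (by simp)
  have step : ∀ m : ℕ,
      e ⟨i, (m : ZMod (k i)), false⟩ ∈
        MulAction.orbit (Subgroup.closure {A, B}) (e ⟨i, 0, false⟩) := by
    intro m
    induction m with
    | zero => simp
    | succ m ih =>
      have := MulAction.mem_orbit_of_mem_orbit (⟨B, hB⟩ * ⟨A, hA⟩ : Subgroup.closure {A, B}) ih
      simpa [Subgroup.smul_def, h.swap, h.shift, cycleSwap, cycleShift] using this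
  have : NeZero (k i) := ⟨(h.pos i).ne'⟩
  have hz := step z.val
  rw [ZMod.natCast_zmod_val] at hz
  cases b
  · exact hz
  · have := MulAction.mem_orbit_of_mem_orbit (⟨A, hA⟩ : Subgroup.closure {A, B}) hz
    simpa [Subgroup.smul_def, h.swap, cycleSwap] using this

theorem fst_smul (h : IsCycleModel A B k e) {g : Equiv.Perm α}
    (hg : g ∈ Subgroup.closure {A, B}) (x : α) : (e.symm (g x)).1 = (e.symm x).1 := by
  induction hg using Subgroup.closure_induction generalizing x with
  | mem g hg =>
    obtain ⟨⟨i, z, b⟩, rfl⟩ := e.surjective x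
    rcases hg with rfl | rfl
    · simp [h.swap, cycleSwap]
    · cases b <;> simp [h.shift, cycleShift]
  | one => rfl
  | mul g g' _ _ hg hg' => rw [Equiv.Perm.mul_apply, hg, hg']
  | inv g _ hg => rw [← hg (g⁻¹ x), ← Equiv.Perm.mul_apply, mul_inv_cancel, Equiv.Perm.one_apply]

theorem orbitSizes_eq [Fintype α] [Fintype ι] (h : IsCycleModel A B k e) :
    orbitSizes (Subgroup.closure {A, B}) = twice ((Finset.univ : Finset ι).val.map k) := by
  rw [orbitSizes_eq_map_card_fiber _ fun x => (e.symm x).1, twice, Multiset.map_map]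
  · refine Multiset.map_congr rfl fun i _ => ?_
    have e₁ : {x // (e.symm x).1 = i} ≃ ZMod (k i) × Bool :=
      (e.symm.subtypeEquiv fun _ => Iff.rfl).trans (Equiv.sigmaSubtype i)
    rw [Nat.card_congr e₁, Nat.card_prod, Nat.card_zmod]
    simp [mul_comm]
  · intro i
    exact ⟨e ⟨i, 0, false⟩, by simp⟩
  · intro x y
    constructor
    · obtain ⟨⟨i, z, b⟩, rfl⟩ := e.surjective x
      obtain ⟨⟨j, w, c⟩, rfl⟩ := e.surjective y
      intro hij
      obtain rfl : i = j := by simpa using hij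
      exact MulAction.orbit_eq_iff.1 ((MulAction.orbit_eq_iff.2 (h.mem_orbit_base i z b)).trans
        (MulAction.orbit_eq_iff.2 (h.mem_orbit_base i w c)).symm)
    · rintro ⟨g, rfl⟩
      exact h.fst_smul g.2 y

theorem sum_two_mul [Fintype α] [Fintype ι] (h : IsCycleModel A B k e) :
    2 * ∑ i, k i = Fintype.card α := by
  have : ∀ i, NeZero (k i) := fun i => ⟨(h.pos i).ne'⟩
  rw [← Fintype.card_congr e, Fintype.card_sigma, Finset.mul_sum]
  simp [ZMod.card, mul_comm]

theorem conj (h : IsCycleModel A B k e) (π : Equiv.Perm α) :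
    IsCycleModel (π * A * π⁻¹) (π * B * π⁻¹) k (e.trans π) where
  pos := h.pos
  swap x := by simp [h.swap]
  shift x := by simp [h.shift]

theorem exists_conj {ι' : Type*} [Fintype ι] [Fintype ι'] {A' B' : Equiv.Perm α} {k' : ι' → ℕ}
    {e' : (Σ i, ZMod (k' i) × Bool) ≃ α} (h : IsCycleModel A B k e)
    (h' : IsCycleModel A' B' k' e')
    (hk : (Finset.univ : Finset ι).val.map k = (Finset.univ : Finset ι').val.map k') :
    ∃ π : Equiv.Perm α, π * A * π⁻¹ = A' ∧ π * B * π⁻¹ = B' := by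
  obtain ⟨σ, rfl⟩ := exists_equiv_of_map_univ_eq hk
  let s : (Σ i, ZMod ((k' ∘ σ) i) × Bool) ≃ Σ j, ZMod (k' j) × Bool :=
    Equiv.sigmaCongrLeft (β := fun j => ZMod (k' j) × Bool) σ
  have hs₁ : ∀ x, s (cycleSwap _ x) = cycleSwap _ (s x) := by
    rintro ⟨i, z, b⟩
    rfl
  have hs₂ : ∀ x, s (cycleShift _ x) = cycleShift _ (s x) := by
    rintro ⟨i, z, _ | _⟩ <;> rfl
  refine ⟨e.symm.trans (s.trans e'), ?_, ?_⟩
  · rw [mul_inv_eq_iff_eq_mul]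
    ext x
    obtain ⟨x, rfl⟩ := e.surjective x
    simp [h.swap, h'.swap, hs₁]
  · rw [mul_inv_eq_iff_eq_mul]
    ext x
    obtain ⟨x, rfl⟩ := e.surjective x
    simp [h.shift, h'.shift, hs₂]

end IsCycleModel

section Existence

variable {α : Type*} {A B : Equiv.Perm α}

theorem apply_pow_ne_pow (hA : A * A = 1) (hA' : ∀ x, A x ≠ x) (hB : B * B = 1)
    (hB' : ∀ x, B x ≠ x) (i j : ℕ) (x : α) : A (((B * A) ^ i) x) ≠ ((B * A) ^ j) x := by
  have hAA : ∀ x, A (A x) = x := fun x => by rw [← Equiv.Perm.mul_apply, hA]; rfl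
  have hBB : ∀ x, B (B x) = x := fun x => by rw [← Equiv.Perm.mul_apply, hB]; rfl
  induction i generalizing j x with
  | zero =>
    induction j using Nat.strong_induction_on generalizing x with
    | _ j ih =>
      match j with
      | 0 => exact hA' x
      | 1 => exact fun h => hB' (A x) (by simpa using h.symm)
      | j + 2 =>
        intro h
        refine ih j (by omega) ((B * A) x) ?_
        rw [pow_succ', pow_succ] at h
        have := congrArg (fun y => A (B y)) h
        simpa [hAA, hBB] using this
  | succ i ih =>
    intro h
    refine ih (j + 1) x ?_
    rw [pow_succ', Equiv.Perm.mul_apply, Equiv.Perm.mul_apply] at h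
    have := congrArg (fun y => B (A y)) h
    rw [pow_succ']
    simpa [hAA, hBB] using this

theorem exists_isCycleModel [Finite α] (hA : A * A = 1) (hA' : ∀ x, A x ≠ x) (hB : B * B = 1)
    (hB' : ∀ x, B x ≠ x) :
    ∃ (k : Quotient (MulAction.orbitRel (Subgroup.closure {A, B}) α) → ℕ)
      (e : (Σ i, ZMod (k i) × Bool) ≃ α), IsCycleModel A B k e := by
  have hAA : ∀ x, A (A x) = x := fun x => by rw [← Equiv.Perm.mul_apply, hA]; rfl
  have hBB : ∀ x, B (B x) = x := fun x => by rw [← Equiv.Perm.mul_apply, hB]; rfl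
  have hAm : A ∈ Subgroup.closure {A, B} := Subgroup.subset_closure (by simp)
  have hBm : B ∈ Subgroup.closure {A, B} := Subgroup.subset_closure (by simp)
  let k : Quotient (MulAction.orbitRel (Subgroup.closure {A, B}) α) → ℕ :=
    fun q => Function.minimalPeriod (B * A) q.out
  have hk : ∀ q, 0 < k q := fun q =>
    Function.minimalPeriod_pos_of_mem_periodicPts
      ((B * A).injective.mem_periodicPts q.out)
  have : ∀ q, NeZero (k q) := fun q => ⟨(hk q).ne'⟩
  let f : (Σ q, ZMod (k q) × Bool) → α := fun x =>
    cond x.2.2 A 1 (((B * A) ^ x.2.1.val) x.1.out)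
  have hmod : ∀ q (m : ℕ), ((B * A) ^ (m % k q)) q.out = ((B * A) ^ m) q.out := by
    intro q m
    rw [← Equiv.Perm.iterate_eq_pow, ← Equiv.Perm.iterate_eq_pow]
    exact Function.iterate_mod_minimalPeriod_eq
  have hsucc : ∀ q (z : ZMod (k q)),
      ((B * A) ^ (z + 1).val) q.out = (B * A) (((B * A) ^ z.val) q.out) := by
    intro q z
    rw [← Equiv.Perm.mul_apply, ← pow_succ', ← hmod q (z.val + 1), ZMod.val_add,
      ZMod.val_one_eq_one_mod, Nat.add_mod_mod]
  have hf₁ : ∀ x, A (f x) = f (cycleSwap k x) := by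
    rintro ⟨q, z, _ | _⟩ <;> simp [f, cycleSwap, hAA]
  have hf₂ : ∀ x, B (f x) = f (cycleShift k x) := by
    have key : ∀ q z, B (f ⟨q, z, true⟩) = f ⟨q, z + 1, false⟩ := by
      intro q z
      simp [f, hsucc]
    rintro ⟨q, z, _ | _⟩
    · have := key q (z - 1)
      rw [sub_add_cancel] at this
      rw [← this, hBB]
      rfl
    · exact key q z
  have hfq : ∀ x, (Quotient.mk _ (f x) : Quotient (MulAction.orbitRel _ α)) = x.1 := by
    rintro ⟨q, z, b⟩
    refine Eq.trans (Quotient.sound ?_) q.out_eq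
    have hg : cond b A 1 * (B * A) ^ z.val ∈ Subgroup.closure {A, B} := by
      refine mul_mem ?_ (pow_mem (mul_mem hBm hAm) _)
      cases b
      · exact one_mem _
      · exact hAm
    exact ⟨⟨_, hg⟩, rfl⟩
  have hinj : Function.Injective f := by
    rintro ⟨q, z, b⟩ ⟨q', z', b'⟩ h
    obtain rfl : q = q' := by
      have h₁ := hfq ⟨q, z, b⟩
      rw [h, hfq] at h₁
      exact h₁.symm
    have aux : ((B * A) ^ z.val) q.out = ((B * A) ^ z'.val) q.out → z = z' := by
      intro hz
      refine ZMod.val_injective _ ?_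
      rw [← Equiv.Perm.iterate_eq_pow, ← Equiv.Perm.iterate_eq_pow] at hz
      exact Function.iterate_injOn_Iio_minimalPeriod (ZMod.val_lt z) (ZMod.val_lt z') hz
    cases b <;> cases b'
    · rw [aux h]
    · exact absurd h.symm (apply_pow_ne_pow hA hA' hB hB' _ _ _)
    · exact absurd h (apply_pow_ne_pow hA hA' hB hB' _ _ _)
    · rw [aux (A.injective h)]
  have hsurj : Function.Surjective f := by
    have hcl : ∀ g ∈ Subgroup.closure {A, B}, ∀ x ∈ Set.range f, g x ∈ Set.range f := by
      have hAi : A⁻¹ = A := inv_eq_of_mul_eq_one_left hA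
      have hBi : B⁻¹ = B := inv_eq_of_mul_eq_one_left hB
      intro g hg
      induction hg using Subgroup.closure_induction'' with
      | mem g hg =>
        rintro _ ⟨x, rfl⟩
        rcases hg with rfl | rfl
        · exact ⟨_, (hf₁ x).symm⟩
        · exact ⟨_, (hf₂ x).symm⟩
      | inv_mem g hg =>
        rintro _ ⟨x, rfl⟩
        rcases hg with rfl | rfl
        · exact ⟨_, by rw [hAi, hf₁ x]⟩
        · exact ⟨_, by rw [hBi, hf₂ x]⟩
      | one => exact fun x hx => hx
      | mul g g' _ _ hg hg' => exact fun x hx => hg _ (hg' x hx)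
    intro y
    obtain ⟨g, hg⟩ : y ∈ MulAction.orbit (Subgroup.closure {A, B})
        (Quotient.mk (MulAction.orbitRel (Subgroup.closure {A, B}) α) y).out :=
      (MulAction.orbitRel (Subgroup.closure {A, B}) α).symm (Quotient.mk_out y)
    rw [← hg]
    exact hcl g g.2 _ ⟨⟨Quotient.mk (MulAction.orbitRel _ α) y, 0, false⟩, by simp [f]⟩
  exact ⟨k, Equiv.ofBijective f ⟨hinj, hsurj⟩, hk, hf₁, hf₂⟩

end Existence

theorem twice_injective : Function.Injective twice :=
  Multiset.map_injective fun _ _ h => Nat.eq_of_mul_eq_mul_left two_pos h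

theorem dMatch_conj {N : ℕ} (A B : PerfMatching N) (π : Equiv.Perm (Fin N)) :
    dMatch (π * A.1 * π⁻¹) (π * B.1 * π⁻¹) = dMatch A.1 B.1 := by
  obtain ⟨k, e, h⟩ := exists_isCycleModel A.2.1 A.2.2 B.2.1 B.2.2
  have := Fintype.ofFinite (Quotient (MulAction.orbitRel (Subgroup.closure {A.1, B.1}) (Fin N)))
  exact (h.conj π).orbitSizes_eq.trans h.orbitSizes_eq.symm

theorem exists_conj_of_dMatch_eq {N : ℕ} (A B C D : PerfMatching N)
    (h : dMatch A.1 B.1 = dMatch C.1 D.1) :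
    ∃ π : Equiv.Perm (Fin N), π * A.1 * π⁻¹ = C.1 ∧ π * B.1 * π⁻¹ = D.1 := by
  obtain ⟨k, e, he⟩ := exists_isCycleModel A.2.1 A.2.2 B.2.1 B.2.2
  obtain ⟨k', e', he'⟩ := exists_isCycleModel C.2.1 C.2.2 D.2.1 D.2.2
  have := Fintype.ofFinite (Quotient (MulAction.orbitRel (Subgroup.closure {A.1, B.1}) (Fin N)))
  have := Fintype.ofFinite (Quotient (MulAction.orbitRel (Subgroup.closure {C.1, D.1}) (Fin N)))
  exact he.exists_conj he'
    (twice_injective (he.orbitSizes_eq.symm.trans (h.trans he'.orbitSizes_eq)))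

theorem exists_dMatch_eq_twice {n : ℕ} (A B : PerfMatching (2 * n)) :
    ∃ μ : Nat.Partition n, dMatch A.1 B.1 = twice μ.parts := by
  obtain ⟨k, e, h⟩ := exists_isCycleModel A.2.1 A.2.2 B.2.1 B.2.2
  have := Fintype.ofFinite
    (Quotient (MulAction.orbitRel (Subgroup.closure {A.1, B.1}) (Fin (2 * n))))
  refine ⟨⟨Finset.univ.val.map k, ?_, ?_⟩, h.orbitSizes_eq⟩
  · intro i hi
    obtain ⟨q, -, rfl⟩ := Multiset.mem_map.1 hi
    exact h.pos q
  · have := h.sum_two_mul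
    rw [Fintype.card_fin] at this
    exact Nat.eq_of_mul_eq_mul_left two_pos this

theorem exists_perfMatching_dMatch_eq {n : ℕ} (μ : Nat.Partition n) :
    ∃ A B : PerfMatching (2 * n), dMatch A.1 B.1 = twice μ.parts := by
  obtain ⟨m, k, hk⟩ : ∃ (m : ℕ) (k : Fin m → ℕ), μ.parts = Finset.univ.val.map k :=
    ⟨_, μ.parts.toList.get, by rw [Fin.univ_val_map, List.ofFn_get, Multiset.coe_toList]⟩
  have hpos : ∀ i, 0 < k i := fun i =>
    μ.parts_pos (hk ▸ Multiset.mem_map_of_mem k (Finset.mem_univ i))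
  have : ∀ i, NeZero (k i) := fun i => ⟨(hpos i).ne'⟩
  have hcard : Fintype.card (Σ i, ZMod (k i) × Bool) = 2 * n := by
    have hsum : ∑ i, k i = n := (congrArg Multiset.sum hk).symm.trans μ.parts_sum
    rw [Fintype.card_sigma, ← hsum, Finset.mul_sum]
    simp [ZMod.card, mul_comm]
  let e := Fintype.equivFinOfCardEq hcard
  let A : Equiv.Perm (Fin (2 * n)) := e.permCongr (cycleSwap_involutive k).toPerm
  let B : Equiv.Perm (Fin (2 * n)) := e.permCongr (cycleShift_involutive k).toPerm
  have h : IsCycleModel A B k e :=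
    ⟨hpos, fun x => by simp [A], fun x => by simp [B]⟩
  refine ⟨⟨A, ?_, ?_⟩, ⟨B, ?_, ?_⟩, ?_⟩
  · ext x
    obtain ⟨x, rfl⟩ := e.surjective x
    simp [h.swap, cycleSwap_involutive k x]
  · intro x
    obtain ⟨x, rfl⟩ := e.surjective x
    simp [h.swap, cycleSwap_ne]
  · ext x
    obtain ⟨x, rfl⟩ := e.surjective x
    simp [h.shift, cycleShift_involutive k x]
  · intro x
    obtain ⟨x, rfl⟩ := e.surjective x
    simp [h.shift, cycleShift_ne]
  · rw [hk]
    exact h.orbitSizes_eq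

theorem Nmat_apply_of_dMatch_eq {n : ℕ} (μ ν : Nat.Partition n) (A B : PerfMatching (2 * n))
    (h : dMatch A.1 B.1 = twice μ.parts) : Nmat n ν A B = if μ = ν then 1 else 0 := by
  simp only [Nmat, Matrix.of_apply, h, twice_injective.eq_iff, Nat.Partition.ext_iff]

theorem sum_smul_Nmat_apply {n : ℕ} (c : Nat.Partition n → ℂ) (μ : Nat.Partition n)
    (A B : PerfMatching (2 * n)) (h : dMatch A.1 B.1 = twice μ.parts) :
    (∑ ν, c ν • Nmat n ν) A B = c μ := by
  simp [Matrix.sum_apply, Nmat_apply_of_dMatch_eq μ _ A B h]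

/-- The family `N_{2μ}` (μ ranging over partitions of `n`) is linearly independent, and
its span consists exactly of the matrices invariant under the simultaneous conjugation
action of `S_{2n}` on pairs of perfect matchings (equivalently, those commuting with
every permutation matrix of the action). -/
theorem nmat_linearIndependent_and_span (n : ℕ) (hn : 1 ≤ n) :
    LinearIndependent ℂ (fun μ : Nat.Partition n => Nmat n μ) ∧
    ∀ T : Matrix (PerfMatching (2 * n)) (PerfMatching (2 * n)) ℂ,
      T ∈ Submodule.span ℂ (Set.range fun μ : Nat.Partition n => Nmat n μ) ↔
        ∀ (π : Equiv.Perm (Fin (2 * n))) (A B C D : PerfMatching (2 * n)),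
          π * A.1 * π⁻¹ = C.1 → π * B.1 * π⁻¹ = D.1 → T C D = T A B := by
  constructor
  · rw [Fintype.linearIndependent_iff]
    intro c hc μ
    obtain ⟨A, B, h⟩ := exists_perfMatching_dMatch_eq μ
    rw [← sum_smul_Nmat_apply c μ A B h, hc]
    rfl
  · intro T
    constructor
    · intro hT π A B C D hC hD
      induction hT using Submodule.span_induction with
      | mem T hT =>
        obtain ⟨μ, rfl⟩ := hT
        simp only [Nmat, Matrix.of_apply, ← hC, ← hD, dMatch_conj]
      | zero => rfl
      | add S T _ _ hS hT => rw [Matrix.add_apply, Matrix.add_apply, hS, hT]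
      | smul c T _ hT => rw [Matrix.smul_apply, Matrix.smul_apply, hT]
    · intro hT
      choose P Q hPQ using fun μ : Nat.Partition n => exists_perfMatching_dMatch_eq μ
      have : T = ∑ μ, T (P μ) (Q μ) • Nmat n μ := by
        ext A B
        obtain ⟨μ, h⟩ := exists_dMatch_eq_twice A B
        rw [sum_smul_Nmat_apply _ μ A B h]
        obtain ⟨π, h₁, h₂⟩ :=
          exists_conj_of_dMatch_eq (P μ) (Q μ) A B ((hPQ μ).trans h.symm)
        exact hT π _ _ _ _ h₁ h₂
      rw [this]
      exact Submodule.sum_mem _ fun μ _ =>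
        Submodule.smul_mem _ _ (Submodule.subset_span ⟨μ, rfl⟩)
end

section
/- Let n ≥ 1, let J be a fixed perfect matching of Fin (2n), and let μ be a partition of n with m_j parts equal to j for each j ≥ 1 and ℓ(μ) parts in total. Then the number of perfect matchings B of Fin (2n) with d(J,B) = 2μ equals 2^n · n! / (z_μ · 2^{ℓ(μ)}), where z_μ = ∏_{j ≥ 1} j^{m_j} · m_j!. -/
/-- `z_μ = ∏_{j≥1} j^{m_j} · m_j!` where `m_j` is the multiplicity of `j` as a part
of `μ`. -/
def zPart (n : ℕ) (μ : Nat.Partition n) : ℕ :=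
  ∏ j ∈ Finset.range (n + 1), j ^ (μ.parts.count j) * (μ.parts.count j).factorial

/-- A two-colouring `c` is flipped by `A` if every point and its image under `A` have
opposite colours. -/
def IsFlipped {α : Type*} (c : α → Bool) (A : Equiv.Perm α) : Prop := ∀ x, c (A x) = !c x

/-- A fixed-point-free involution admits a two-colouring that it flips. -/
theorem exists_flipped_of_involutive {β : Type*} (f : β → β) (hf : Function.Involutive f)
    (hne : ∀ x, f x ≠ x) : ∃ c : β → Bool, ∀ x, c (f x) = !c x := by
  classical
  let r : β → β → Prop := WellOrderingRel
  refine ⟨fun x => decide (r x (f x)), fun x => ?_⟩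
  have hasymm : ∀ a b, r a b → ¬ r b a := fun a b => asymm_of WellOrderingRel
  rcases trichotomous_of WellOrderingRel x (f x) with h | h | h
  · have h' := hasymm _ _ h
    simp [hf x, r, h, h']
  · exact absurd h.symm (hne x)
  · have h' := hasymm _ _ h
    simp [hf x, r, h, h']

theorem conj_zpow_mul {G : Type*} [Group G] {a b : G} (ha : a * a = 1) (hb : b * b = 1) (k : ℤ) :
    a * (a * b) ^ k = (a * b) ^ (-k) * a := by
  have ha' : a⁻¹ = a := inv_eq_of_mul_eq_one_left ha
  have hb' : b⁻¹ = b := inv_eq_of_mul_eq_one_left hb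
  have h : a * (a * b) * a⁻¹ = (a * b)⁻¹ := by
    rw [mul_inv_rev, ← mul_assoc, ha, ha', hb', one_mul]
  have := conj_zpow (i := k) (a := a) (b := a * b)
  rw [h, inv_zpow'] at this
  rw [this]; group

/-- The union of two perfect matchings is bipartite. -/
theorem exists_isFlipped {α : Type*} (J B : Equiv.Perm α) (hJ : J * J = 1) (hJ' : ∀ x, J x ≠ x)
    (hB : B * B = 1) (hB' : ∀ x, B x ≠ x) : ∃ c, IsFlipped c J ∧ IsFlipped c B := by
  have hconj := conj_zpow_mul hJ hB
  have hJJ : ∀ x, J (J x) = x := fun x => by simpa using congrArg (· x) hJ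
  have hne : ∀ x, ¬ (J * B).SameCycle x (J x) := by
    rintro x ⟨k, hk⟩
    obtain ⟨m, rfl | rfl⟩ := Int.even_or_odd' k
    · apply hJ' (((J * B) ^ m) x)
      rw [← Equiv.Perm.mul_apply, hconj, Equiv.Perm.mul_apply, ← hk, ← Equiv.Perm.mul_apply,
        ← zpow_add]
      congr 2; ring
    · apply hB' (((J * B) ^ m) x)
      apply J.injective
      have h : J (((J * B) ^ m) x) = ((J * B) ^ (1 + m)) x := by
        rw [← Equiv.Perm.mul_apply, hconj, Equiv.Perm.mul_apply, ← hk, ← Equiv.Perm.mul_apply,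
          ← zpow_add]
        congr 2; ring
      rw [h, zpow_add, zpow_one]
      rfl
  let s := Equiv.Perm.SameCycle.setoid (J * B)
  have hmap : ∀ x y, (J * B).SameCycle x y → (J * B).SameCycle (J x) (J y) := by
    rintro x _ ⟨k, rfl⟩
    refine ⟨-k, ?_⟩
    rw [← Equiv.Perm.mul_apply, ← Equiv.Perm.mul_apply, hconj]
  obtain ⟨c, hc⟩ := exists_flipped_of_involutive
    (Quotient.map J hmap : Quotient s → Quotient s)
    (by rintro ⟨x⟩; exact congrArg (Quotient.mk s) (hJJ x))
    (by rintro ⟨x⟩ h; exact hne x (Quotient.exact h).symm)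
  have hcJ : IsFlipped (fun x => c (Quotient.mk s x)) J := fun x => hc (Quotient.mk s x)
  refine ⟨_, hcJ, fun x => ?_⟩
  have h : Quotient.mk s x = Quotient.mk s (J (B x)) := Quotient.sound ⟨1, by simp⟩
  have := hcJ (B x)
  simp only [h] at this ⊢
  simp [this]

/-- The number of two-colourings flipped by all generators is `2` to the number of orbits,
as soon as there is one. -/
theorem card_isFlipped_pair {α : Type*} [Fintype α] (J B : Equiv.Perm α) (c₀ : α → Bool)
    (hJ : IsFlipped c₀ J) (hB : IsFlipped c₀ B) :
    Nat.card {c : α → Bool // IsFlipped c J ∧ IsFlipped c B} =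
      2 ^ (Multiset.card (orbitSizes (Subgroup.closure {J, B}))) := by
  classical
  let G := Subgroup.closure {J, B}
  have hinv : ∀ c : α → Bool, IsFlipped c J → IsFlipped c B → ∀ g ∈ G, ∀ x,
      (c (g x) ^^ c₀ (g x)) = (c x ^^ c₀ x) := by
    intro c h1 h2 g hg
    induction hg using Subgroup.closure_induction with
    | mem y hy =>
      rcases hy with rfl | rfl <;> intro x
      · simp [h1 x, hJ x]
      · simp [h2 x, hB x]
    | one => simp
    | mul a b _ _ ha hb => intro x; rw [Equiv.Perm.mul_apply, ha, hb]
    | inv a _ ha => intro x; rw [← ha (a⁻¹ x)]; simp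
  let e : {c : α → Bool // IsFlipped c J ∧ IsFlipped c B} ≃
      (Quotient (MulAction.orbitRel G α) → Bool) :=
    { toFun := fun c => Quotient.lift (fun x => c.1 x ^^ c₀ x) (by
        rintro a b ⟨g, rfl⟩
        exact hinv c.1 c.2.1 c.2.2 g g.2 b)
      invFun := fun f => ⟨fun x => f (Quotient.mk _ x) ^^ c₀ x, by
        have h : ∀ g ∈ G, ∀ x, Quotient.mk (MulAction.orbitRel G α) (g x) = Quotient.mk _ x :=
          fun g hg x => Quotient.sound ⟨⟨g, hg⟩, rfl⟩
        constructor <;> intro x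
        · simp [h J (Subgroup.subset_closure (by simp)) x, hJ x]
        · simp [h B (Subgroup.subset_closure (by simp)) x, hB x]⟩
      left_inv := fun c => by ext x; simp
      right_inv := fun f => by ext q; induction q using Quotient.inductionOn with | _ x => simp }
  rw [Nat.card_congr e]
  simp only [orbitSizes, Nat.card_eq_fintype_card, Fintype.card_fun, Fintype.card_bool,
    Multiset.card_map, Finset.card_val, Finset.card_univ, G]
  congr!

/-- The two colour classes of a flipped colouring have the same size. -/
theorem card_eq_two_mul_of_isFlipped {α : Type*} [Fintype α] {J : Equiv.Perm α}
    {c : α → Bool} (hc : IsFlipped c J) :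
    Fintype.card α = 2 * Fintype.card {x // c x = true} := by
  have e : {x // c x = true} ≃ {x // ¬ c x = true} :=
    J.subtypeEquiv (fun x => by simp [hc x])
  rw [← Fintype.card_congr (Equiv.sumCompl fun x => c x = true), Fintype.card_sum,
    ← Fintype.card_congr e, two_mul]

/-- The number of two-colourings flipped by a perfect matching. -/
theorem card_isFlipped {α : Type*} [Fintype α] {J : Equiv.Perm α}
    (hJ : J * J = 1) {c₀ : α → Bool} (hc₀ : IsFlipped c₀ J) :
    Nat.card {c : α → Bool // IsFlipped c J} = 2 ^ Fintype.card {x // c₀ x = true} := by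
  have hJJ : ∀ x, J (J x) = x := fun x => by simpa using congrArg (· x) hJ
  let e : {c : α → Bool // IsFlipped c J} ≃ ({x // c₀ x = true} → Bool) :=
    { toFun := fun c x => c.1 x
      invFun := fun f => ⟨fun x => if h : c₀ x = true then f ⟨x, h⟩ else
          !f ⟨J x, by simpa [hc₀ x] using h⟩, fun x => by
        by_cases h : c₀ x = true <;> simp [hc₀ x, h, hJJ]⟩
      left_inv := fun c => by
        ext x
        by_cases h : c₀ x = true <;> simp [h, c.2 x]
      right_inv := fun f => by ext x; simp [x.2] }
  classical
  rw [Nat.card_congr e, Nat.card_eq_fintype_card, Fintype.card_fun, Fintype.card_bool]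

theorem card_partition_eq {β : Type*} [Fintype β] [DecidableEq β] {n : ℕ} (hn : 1 ≤ n)
    (hβ : Fintype.card β = n) (μ : Nat.Partition n) :
    Nat.card {σ : Equiv.Perm β // σ.partition.parts = μ.parts} * zPart n μ = n.factorial := by
  classical
  set m := μ.parts.filter (2 ≤ ·) with hm
  have hμ : μ.parts = m + Multiset.replicate (n - m.sum) 1 ∧ m.sum ≤ n := by
    have h1 := Multiset.filter_add_not (2 ≤ ·) μ.parts
    have h2 : μ.parts.filter (fun i => ¬ 2 ≤ i) =
        Multiset.replicate (Multiset.card (μ.parts.filter (fun i => ¬ 2 ≤ i))) 1 :=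
      Multiset.eq_replicate_card.2 fun i hi => by
        have := μ.parts_pos (Multiset.mem_filter.1 hi).1
        have := (Multiset.mem_filter.1 hi).2
        omega
    rw [← hm, h2] at h1
    have h3 := congrArg Multiset.sum h1
    rw [μ.parts_sum, Multiset.sum_add, Multiset.sum_replicate, smul_eq_mul, mul_one] at h3
    have h4 : n - m.sum = Multiset.card (μ.parts.filter (fun i => ¬ 2 ≤ i)) := by omega
    exact ⟨by rw [h4, h1], by omega⟩
  have hiff : ∀ σ : Equiv.Perm β, σ.partition.parts = μ.parts ↔ σ.cycleType = m := by
    intro σ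
    constructor
    · intro h
      rw [← Equiv.Perm.filter_parts_partition_eq_cycleType, h]
    · intro h
      rw [Equiv.Perm.parts_partition, hμ.1, ← Equiv.Perm.sum_cycleType, h, hβ]
  have hm2 : ∀ a ∈ m, 2 ≤ a := fun a ha => (Multiset.mem_filter.1 ha).2
  have hcard := Equiv.Perm.card_of_cycleType_mul_eq β m
  rw [if_pos ⟨hβ ▸ hμ.2, hm2⟩, hβ] at hcard
  rw [← hcard, Nat.card_eq_fintype_card, Fintype.card_subtype]
  simp_rw [hiff]
  congr 1
  have h1m : 1 ∉ m := fun h => by have := hm2 1 h; omega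
  have hle : ∀ a ∈ m, a ≤ n := fun a ha => (Multiset.le_sum_of_mem ha).trans hμ.2
  have hc1 : μ.parts.count 1 = n - m.sum := by
    rw [hμ.1]; simp [Multiset.count_eq_zero_of_notMem h1m]
  have hc : ∀ j, 1 ≠ j → μ.parts.count j = m.count j := by
    intro j hj
    rw [hμ.1]; simp [Multiset.count_replicate, hj]
  have hsub : insert 1 m.toFinset ⊆ Finset.range (n + 1) := by
    intro a ha
    rcases Finset.mem_insert.1 ha with rfl | ha
    · simp; omega
    · simpa [Nat.lt_succ_iff] using hle a (Multiset.mem_toFinset.1 ha)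
  rw [zPart, ← Finset.prod_subset hsub, Finset.prod_insert (by simpa using h1m), hc1,
    Finset.prod_multiset_count m, one_pow, one_mul, mul_assoc, ← Finset.prod_mul_distrib]
  · congr 1
    refine Finset.prod_congr rfl fun j hj => ?_
    rw [hc j]
    rintro rfl
    exact h1m (Multiset.mem_toFinset.1 hj)
  · intro j _ hj
    simp only [Finset.mem_insert, Multiset.mem_toFinset, not_or] at hj
    rw [hc j (Ne.symm hj.1), Multiset.count_eq_zero_of_notMem hj.2]
    simp

theorem orbitSizes_eq_map {α : Type*} [Fintype α] (G : Subgroup (Equiv.Perm α))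
    [Fintype (Quotient (MulAction.orbitRel G α))] :
    orbitSizes G = (Finset.univ : Finset (Quotient (MulAction.orbitRel G α))).val.map
      fun q => Nat.card (MulAction.orbitRel.Quotient.orbit q) := by
  unfold orbitSizes
  have : ∀ q : Quotient (MulAction.orbitRel G α), MulAction.orbitRel.Quotient.orbit q =
      MulAction.orbit G q.out :=
    fun q => MulAction.orbitRel.Quotient.orbit_eq_orbit_out q Quotient.out_eq'
  simp_rw [this]
  congr!

/-- Counting points by the size of their orbit. -/
theorem mul_count_orbitSizes {α : Type*} [Fintype α] (G : Subgroup (Equiv.Perm α)) (j : ℕ) :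
    j * (orbitSizes G).count j = Nat.card {x : α // Nat.card (MulAction.orbit G x) = j} := by
  classical
  rw [orbitSizes_eq_map, Multiset.count_map, ← Finset.filter_val, Finset.card_val,
    Nat.card_eq_fintype_card, Fintype.card_subtype]
  rw [Finset.card_eq_sum_card_fiberwise (f := fun x => Quotient.mk (MulAction.orbitRel G α) x)
    (t := {q | j = Nat.card (MulAction.orbitRel.Quotient.orbit q)})]
  · rw [mul_comm, ← smul_eq_mul, ← Finset.sum_const]
    refine Finset.sum_congr rfl fun q hq => ?_
    have hq := (Finset.mem_filter.1 hq).2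
    rw [hq, Nat.card_eq_fintype_card, ← Set.toFinset_card]
    congr 1
    ext x
    induction q using Quotient.inductionOn with | _ y =>
    have hy : MulAction.orbitRel.Quotient.orbit (Quotient.mk (MulAction.orbitRel G α) y) =
      MulAction.orbit G y := MulAction.orbitRel.Quotient.orbit_mk y
    simp only [hy, Set.mem_toFinset, Finset.mem_filter, Finset.mem_univ, true_and] at hq ⊢
    constructor
    · intro h
      exact ⟨by rw [MulAction.orbit_eq_iff.2 h, Nat.card_eq_card_toFinset], Quotient.sound h⟩
    · rintro ⟨_, h⟩
      exact Quotient.exact h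
  · intro x hx
    have : MulAction.orbitRel.Quotient.orbit (Quotient.mk (MulAction.orbitRel G α) x) =
      MulAction.orbit G x := MulAction.orbitRel.Quotient.orbit_mk x
    simpa [this, eq_comm] using hx

theorem mem_orbit_zpowers_iff {α : Type*} {σ : Equiv.Perm α} {x y : α} :
    y ∈ MulAction.orbit (Subgroup.zpowers σ) x ↔ σ.SameCycle x y := by
  constructor
  · rintro ⟨⟨_, k, rfl⟩, rfl⟩
    exact ⟨k, rfl⟩
  · rintro ⟨k, rfl⟩
    exact ⟨⟨_, k, rfl⟩, rfl⟩

theorem card_orbit_zpowers {α : Type*} [Fintype α] [DecidableEq α] (σ : Equiv.Perm α) (x : α) :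
    Nat.card (MulAction.orbit (Subgroup.zpowers σ) x) =
      if σ x = x then 1 else (σ.cycleOf x).support.card := by
  split_ifs with h
  · have : MulAction.orbit (Subgroup.zpowers σ) x = {x} := by
      ext y
      rw [mem_orbit_zpowers_iff, Set.mem_singleton_iff]
      exact ⟨fun hy => (hy.eq_of_left h).symm, fun hy => hy ▸ Equiv.Perm.SameCycle.refl _ _⟩
    rw [this]; simp
  · have : MulAction.orbit (Subgroup.zpowers σ) x = (σ.cycleOf x).support := by
      ext y
      rw [mem_orbit_zpowers_iff, Finset.mem_coe, Equiv.Perm.mem_support_cycleOf_iff' h]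
    rw [this]; exact Nat.card_eq_card_toFinset _ |>.trans (by rw [Finset.toFinset_coe])

/-- The cycles of a permutation, including its fixed points, are the orbits of its powers. -/
theorem orbitSizes_zpowers {α : Type*} [Fintype α] [DecidableEq α] (σ : Equiv.Perm α) :
    orbitSizes (Subgroup.zpowers σ) = σ.partition.parts := by
  classical
  ext j
  rcases Nat.eq_zero_or_pos j with rfl | hj
  · rw [Multiset.count_eq_zero_of_notMem, Multiset.count_eq_zero_of_notMem]
    · exact fun h => (σ.partition.parts_pos h).ne rfl
    · intro h
      obtain ⟨q, -, hq⟩ := Multiset.mem_map.1 h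
      have := (MulAction.nonempty_orbit (M := Subgroup.zpowers σ) q.out).to_subtype
      exact Nat.card_pos.ne' hq
  apply Nat.eq_of_mul_eq_mul_left hj
  rw [mul_count_orbitSizes, Nat.card_eq_fintype_card, Fintype.card_subtype,
    Equiv.Perm.parts_partition, Multiset.count_add, Multiset.count_replicate]
  simp_rw [card_orbit_zpowers]
  rcases Nat.lt_or_ge 1 j with h1 | h1
  · rw [if_neg h1.ne, add_zero, Equiv.Perm.cycleType_def, Multiset.count_map, ← Finset.filter_val,
      Finset.card_val,
      Finset.card_eq_sum_card_fiberwise (f := fun x => σ.cycleOf x)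
        (t := {c ∈ σ.cycleFactorsFinset | j = (Finset.card ∘ Equiv.Perm.support) c})]
    · rw [mul_comm, ← smul_eq_mul, ← Finset.sum_const]
      refine Finset.sum_congr rfl fun c hc => ?_
      obtain ⟨hc, hcj⟩ := Finset.mem_filter.1 hc
      rw [hcj]
      simp only [Function.comp_apply]
      congr 1
      ext x
      simp only [Finset.mem_filter, Finset.mem_univ, true_and]
      rw [← Equiv.Perm.eq_cycleOf_of_mem_cycleFactorsFinset_iff σ c hc x, eq_comm (a := c)]
      refine ⟨fun h => h.2, fun h => ⟨?_, h⟩⟩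
      subst h
      rw [if_neg (Equiv.Perm.mem_support.1 (Equiv.Perm.cycleOf_mem_cycleFactorsFinset_iff.1 hc))]
    · intro x hx
      simp only [Finset.coe_filter, Finset.mem_univ, true_and, Set.mem_ofPred_eq] at hx ⊢
      split_ifs at hx with h
      · omega
      · exact ⟨Equiv.Perm.cycleOf_mem_cycleFactorsFinset_iff.2 (Equiv.Perm.mem_support.2 h),
          hx.symm⟩
  · obtain rfl : j = 1 := by omega
    rw [if_pos rfl, one_mul, Multiset.count_eq_zero_of_notMem
      (fun h => (Equiv.Perm.one_lt_of_mem_cycleType h).ne rfl), zero_add,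
      ← Finset.card_compl]
    congr 1
    ext x
    simp only [Finset.mem_filter, Finset.mem_univ, true_and, Finset.mem_compl,
      Equiv.Perm.mem_support, not_not]
    split_ifs with h
    · simp [h]
    · have := (Equiv.Perm.isCycle_cycleOf σ h).two_le_card_support
      simp only [h, iff_false]
      omega

/-- For a two-colouring flipped by a matching `J`, the matchings flipping the same colouring
correspond to the permutations of a colour class. -/
def flippedEquivPerm {α : Type*} {J : Equiv.Perm α} (hJ : ∀ x, J (J x) = x)
    {c : α → Bool} (hc : IsFlipped c J) :
    {B : Equiv.Perm α // B * B = 1 ∧ IsFlipped c B} ≃ Equiv.Perm {x // c x = true} where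
  toFun B := (J * B.1).subtypePerm fun x => by simp [hc (B.1 x), B.2.2 x]
  invFun σ :=
    let f : α → α := fun x => if h : c x = true then J (σ ⟨x, h⟩) else
      σ.symm ⟨J x, by simpa [hc x] using h⟩
    have hf : Function.Involutive f := fun x => by
      by_cases h : c x = true
      · have h' : c (J (σ ⟨x, h⟩)) ≠ true := by simp [hc (σ ⟨x, h⟩), (σ ⟨x, h⟩).2]
        simp [f, h, h', hJ]
      · simp [f, h, (σ.symm ⟨J x, by simpa [hc x] using h⟩).2, hJ]
    ⟨hf.toPerm, Equiv.ext hf, fun x => by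
      by_cases h : c x = true
      · simp [f, h, hc (σ ⟨x, h⟩), (σ ⟨x, h⟩).2]
      · simp [f, h, (σ.symm ⟨J x, by simpa [hc x] using h⟩).2]⟩
  left_inv := fun ⟨B, hB, hcB⟩ => by
    have hBB : ∀ x, B (B x) = x := fun x => by simpa using congrArg (· x) hB
    ext x
    by_cases h : c x = true
    · simp [h, hJ]
    · simp only [Function.Involutive.coe_toPerm, h]
      have h1 : c (J x) = true := by simpa [hc x] using h
      have h2 : c (B x) = true := by simpa [hcB x] using h
      have : (⟨J x, h1⟩ : {x // c x = true}) =
          (J * B).subtypePerm (fun x => by simp [hc (B x), hcB x]) ⟨B x, h2⟩ := by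
        ext; simp [hBB]
      rw [dif_neg (by simp), this]
      exact congrArg Subtype.val (Equiv.symm_apply_apply _ _)
  right_inv σ := by
    ext x
    exact (congrArg J (dif_pos x.2)).trans (hJ _)

theorem exists_zpow_of_mem_closure_pair {G : Type*} [Group G] {a b : G} (ha : a * a = 1)
    (hb : b * b = 1) {g : G} (hg : g ∈ Subgroup.closure {a, b}) :
    ∃ k : ℤ, g = (a * b) ^ k ∨ g = (a * b) ^ k * a := by
  have ha' : a⁻¹ = a := inv_eq_of_mul_eq_one_left ha
  have hb' : b⁻¹ = b := inv_eq_of_mul_eq_one_left hb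
  have hconj := conj_zpow_mul ha hb
  induction hg using Subgroup.closure_induction with
  | mem y hy =>
    rcases hy with rfl | rfl
    · exact ⟨0, Or.inr (by simp)⟩
    · exact ⟨-1, Or.inr (by rw [zpow_neg_one, mul_inv_rev, ha', hb', mul_assoc, ha, mul_one])⟩
  | one => exact ⟨0, Or.inl (by simp)⟩
  | mul x y _ _ hx hy =>
    obtain ⟨k, rfl | rfl⟩ := hx <;> obtain ⟨l, rfl | rfl⟩ := hy
    · exact ⟨k + l, Or.inl (zpow_add _ _ _).symm⟩
    · exact ⟨k + l, Or.inr (by rw [zpow_add, mul_assoc])⟩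
    · exact ⟨k + -l, Or.inr (by rw [mul_assoc, hconj, zpow_add, mul_assoc])⟩
    · exact ⟨k + -l, Or.inl (by
        rw [mul_assoc, ← mul_assoc a, hconj, zpow_add, mul_assoc _ a a, ha, mul_one])⟩
  | inv x _ hx =>
    obtain ⟨k, rfl | rfl⟩ := hx
    · exact ⟨-k, Or.inl (zpow_neg _ _).symm⟩
    · exact ⟨k, Or.inr (by rw [mul_inv_rev, ha', ← zpow_neg, hconj, neg_neg])⟩

/-- The orbits of the group generated by two matchings are twice as large as the cycles they
induce on a colour class. -/
theorem orbitSizes_closure_pair {α : Type*} [Fintype α] {J B : Equiv.Perm α}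
    (hJ : J * J = 1) (hB : B * B = 1) {c : α → Bool} (hcJ : IsFlipped c J)
    (hcB : IsFlipped c B) (σ : Equiv.Perm {x // c x = true}) (hσ : ∀ x, (σ x : α) = J (B x)) :
    orbitSizes (Subgroup.closure {J, B}) = twice (orbitSizes (Subgroup.zpowers σ)) := by
  classical
  set G := Subgroup.closure {J, B} with hG
  set H := Subgroup.zpowers σ with hH
  have hJG : J ∈ G := Subgroup.subset_closure (by simp)
  have hBG : B ∈ G := Subgroup.subset_closure (by simp)
  obtain rfl : σ = (J * B).subtypePerm (fun x => by simp [hcJ (B x), hcB x]) := by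
    ext x; simp [hσ]
  have hzpow : ∀ (k : ℤ) (x : {x // c x = true}),
      ((((J * B).subtypePerm (fun x => by simp [hcJ (B x), hcB x])) ^ k) x : α) =
        ((J * B) ^ k) x.1 := fun k x => by
    rw [Equiv.Perm.subtypePerm_zpow, Equiv.Perm.subtypePerm_apply]
  have hmem : ∀ (x : {x // c x = true}) (y : α), y ∈ MulAction.orbit G x.1 ↔
      ∃ z ∈ MulAction.orbit H x, y = z.1 ∨ y = J z.1 := by
    intro x y
    constructor
    · rintro ⟨⟨g, hg⟩, rfl⟩
      obtain ⟨k, rfl | rfl⟩ := exists_zpow_of_mem_closure_pair hJ hB hg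
      · exact ⟨_, mem_orbit_zpowers_iff.2 ⟨k, rfl⟩, Or.inl (hzpow k x).symm⟩
      · refine ⟨_, mem_orbit_zpowers_iff.2 ⟨-k, rfl⟩, Or.inr ?_⟩
        rw [hzpow, ← Equiv.Perm.mul_apply, conj_zpow_mul hJ hB, neg_neg]
        rfl
    · rintro ⟨z, hz, h⟩
      obtain ⟨k, rfl⟩ := mem_orbit_zpowers_iff.1 hz
      rw [hzpow] at h
      have hk : (J * B) ^ k ∈ G := G.zpow_mem (G.mul_mem hJG hBG) k
      rcases h with rfl | rfl
      · exact ⟨⟨_, hk⟩, rfl⟩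
      · exact ⟨⟨_, G.mul_mem hJG hk⟩, rfl⟩
  have hJne : ∀ x y : {x // c x = true}, x.1 ≠ J y.1 := fun x y h => by
    have := hcJ y.1
    rw [← h, x.2, y.2] at this
    simp at this
  have hcard : ∀ x : {x // c x = true},
      Nat.card (MulAction.orbit G x.1) = 2 * Nat.card (MulAction.orbit H x) := by
    intro x
    have : MulAction.orbit G x.1 = (Subtype.val '' MulAction.orbit H x) ∪
        ((fun z => J z.1) '' MulAction.orbit H x) := by
      ext y
      rw [hmem]
      simp only [Set.mem_union, Set.mem_image]
      grind
    rw [this, Nat.card_coe_set_eq, Nat.card_coe_set_eq, Set.ncard_union_eq,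
      Set.ncard_image_of_injective _ Subtype.val_injective,
      Set.ncard_image_of_injective (f := fun z : {x // c x = true} => J z.1) _
        (J.injective.comp Subtype.val_injective), two_mul]
    rw [Set.disjoint_left]
    rintro _ ⟨z, _, rfl⟩ ⟨w, _, h⟩
    exact hJne z w h.symm
  have hrel : ∀ x y : {x // c x = true},
      x.1 ∈ MulAction.orbit G y.1 ↔ x ∈ MulAction.orbit H y := by
    intro x y
    rw [hmem]
    constructor
    · rintro ⟨z, hz, h | h⟩
      · rwa [Subtype.ext h]
      · exact absurd h (hJne x z)
    · exact fun h => ⟨x, h, Or.inl rfl⟩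
  let φ : Quotient (MulAction.orbitRel H {x // c x = true}) → Quotient (MulAction.orbitRel G α) :=
    Quotient.map Subtype.val fun x y h => (hrel x y).2 h
  have hφ : Function.Bijective φ := by
    constructor
    · rintro ⟨x⟩ ⟨y⟩ h
      exact Quotient.sound ((hrel x y).1 (Quotient.exact h))
    · rintro ⟨y⟩
      by_cases h : c y = true
      · exact ⟨Quotient.mk _ ⟨y, h⟩, rfl⟩
      · exact ⟨Quotient.mk _ ⟨J y, by simpa [hcJ y] using h⟩, Quotient.sound ⟨⟨J, hJG⟩, rfl⟩⟩
  rw [orbitSizes_eq_map, orbitSizes_eq_map, twice, Multiset.map_map,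
    ← Multiset.map_univ_val_equiv (Equiv.ofBijective φ hφ), Multiset.map_map]
  refine Multiset.map_congr rfl fun q _ => ?_
  induction q using Quotient.inductionOn with | _ x =>
  exact hcard x

/-- The size of the orbital `{B : d(J,B) = 2μ}` of perfect matchings of `Fin (2n)`:
it equals `2^n · n! / (z_μ · 2^{ℓ(μ)})`. -/
theorem card_orbital_of_matchings (n : ℕ) (hn : 1 ≤ n) (J : PerfMatching (2 * n))
    (μ : Nat.Partition n) :
    (Nat.card {B : PerfMatching (2 * n) // dMatch J.1 B.1 = twice μ.parts} : ℚ) =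
      (2 ^ n * n.factorial : ℚ) /
        ((zPart n μ : ℚ) * 2 ^ (Multiset.card μ.parts)) := by
  classical
  have htwice : Function.Injective twice := Multiset.map_injective fun a b h => by
    simpa using h
  have hJJ : ∀ x, J.1 (J.1 x) = x := fun x => by simpa using congrArg (· x) J.2.1
  have hhalf : ∀ c : Fin (2 * n) → Bool, IsFlipped c J.1 →
      Fintype.card {x // c x = true} = n := fun c hc => by
    have := card_eq_two_mul_of_isFlipped hc
    rw [Fintype.card_fin] at this
    omega
  obtain ⟨c₀, hc₀, -⟩ := exists_isFlipped J.1 J.1 J.2.1 J.2.2 J.2.1 J.2.2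
  let s : Finset (PerfMatching (2 * n)) := {B | dMatch J.1 B.1 = twice μ.parts}
  let t : Finset (Fin (2 * n) → Bool) := {c | IsFlipped c J.1}
  have ht : t.card = 2 ^ n := by
    have := card_isFlipped J.2.1 hc₀
    rwa [hhalf c₀ hc₀, Nat.card_eq_fintype_card, Fintype.card_subtype] at this
  have hP : ∀ c, IsFlipped c J.1 →
      Nat.card {σ : Equiv.Perm {x // c x = true} // σ.partition.parts = μ.parts} * zPart n μ =
        n.factorial := fun c hc => card_partition_eq hn (hhalf c hc) μ
  have hz : 0 < zPart n μ := Nat.pos_of_ne_zero fun h => by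
    have := hP c₀ hc₀
    rw [h, mul_zero] at this
    exact n.factorial_ne_zero this.symm
  have key := Finset.card_mul_eq_card_mul (fun (B : PerfMatching (2 * n)) c => IsFlipped c B.1)
    (s := s) (t := t) (m := 2 ^ Multiset.card μ.parts) (n := n.factorial / zPart n μ) ?_ ?_
  · have hs : Nat.card {B : PerfMatching (2 * n) // dMatch J.1 B.1 = twice μ.parts} = s.card := by
      rw [Nat.card_eq_fintype_card, Fintype.card_subtype]
    have hdvd : zPart n μ ∣ n.factorial := ⟨_, by rw [mul_comm, hP c₀ hc₀]⟩
    have hz' : (zPart n μ : ℚ) ≠ 0 := by exact_mod_cast hz.ne'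
    have key' : (s.card : ℚ) * 2 ^ Multiset.card μ.parts = 2 ^ n * (n.factorial / zPart n μ) := by
      rw [← Nat.cast_div hdvd hz']
      rw [ht] at key
      exact_mod_cast key
    rw [hs, eq_div_iff (by positivity), mul_comm (zPart n μ : ℚ), ← mul_assoc, key']
    field_simp
  · intro B hB
    have hB : orbitSizes (Subgroup.closure {J.1, B.1}) = twice μ.parts :=
      (Finset.mem_filter.1 hB).2
    obtain ⟨c, hcJ, hcB⟩ := exists_isFlipped J.1 B.1 J.2.1 J.2.2 B.2.1 B.2.2
    have := card_isFlipped_pair J.1 B.1 c hcJ hcB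
    rw [hB, twice, Multiset.card_map, Nat.card_eq_fintype_card, Fintype.card_subtype] at this
    rw [← this, Finset.bipartiteAbove, Finset.filter_filter]
  · intro c hc
    have hc : IsFlipped c J.1 := (Finset.mem_filter.1 hc).2
    rw [← hP c hc, Nat.mul_div_cancel _ hz, Finset.bipartiteBelow, Finset.filter_filter,
      ← Fintype.card_subtype, ← Nat.card_eq_fintype_card]
    refine Nat.card_congr (Equiv.trans ?_ ((flippedEquivPerm hJJ hc).subtypeEquiv
      (p := fun B => dMatch J.1 B.1 = twice μ.parts) fun B => ?_))
    · exact
        { toFun := fun B => ⟨⟨B.1.1, B.1.2.1, B.2.2⟩, B.2.1⟩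
          invFun := fun B => ⟨⟨B.1.1, B.1.2.1, fun x h => by simpa [h] using B.1.2.2 x⟩,
            B.2, B.1.2.2⟩
          left_inv := fun _ => rfl
          right_inv := fun _ => rfl }
    · rw [dMatch, orbitSizes_closure_pair J.2.1 B.2.1 hc B.2.2 (flippedEquivPerm hJJ hc B)
        (fun _ => rfl), orbitSizes_zpowers, htwice.eq_iff]
end
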